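/- (Equation (83), Gaussian integer case of Theorem 2.) Let ℤ[i] be the ring of Gaussian integers with norm N(z) = z·z̄, and for z ∈ ℤ[i] ∖ {0} let d(z) = Card{e ∈ ℤ[i] ∖ {0} : e ∣ z}. Let S = ∑_{z ∈ ℤ[i] ∖ {0}} N(z)^{−2} (a convergent sum). Then, as X → +∞, ∑ d(x)·d(x+1) taken over all x ∈ ℤ[i] ∖ {0, −1} with N(x) ≤ X equals (4π³ / S) · X (log X)² + O(X log X). -/

import Mathlib

/-- The naive number-of-divisors function on the Gaussian integers:
`dG z` is the number of nonzero divisors of `z`. -/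
noncomputable def dG (z : GaussianInt) : ℕ :=
  {e : GaussianInt | e ≠ 0 ∧ e ∣ z}.ncard

/-- The sum `S = ∑_{z ∈ ℤ[i] ∖ {0}} N(z)⁻²`. -/
noncomputable def SGauss : ℝ :=
  ∑' z : {z : GaussianInt // z ≠ 0}, ((Zsqrtd.norm (z : GaussianInt) : ℝ) ^ 2)⁻¹

/-!
Take `t = √X + 1`. Dirichlet's hyperbola method writes `d(x)` as twice the number of divisors of
norm at most `t`, minus the number of balanced divisors, for which the codivisor has norm at most
`t` as well. Exchanging sums, `∑ d(x) d(x + 1)` becomes four times a count of the `x` with `a ∣ x`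
and `c ∣ x + 1` over pairs `(a, c)` of norm at most `t`. Such `a` and `c` are coprime, so the `x`
form one residue class modulo `a * c`, and Gauss's lattice point bound gives
`π X / (N(a) N(c))` of them up to `O(√(X / (N(a) N(c))) + 1)`. Balanced divisors `a` force
`N(x) ≤ t N(a)`, so they contribute only `O(X log X)`.

It remains to evaluate `B(t) = ∑ 1 / (N(a) N(c))` over coprime pairs. With
`A(t) = ∑ 1 / N(a) = π log t + O(1)`, sorting all pairs by their greatest common divisor gives
`4 A(t) ^ 2 = ∑ N(g)⁻² B(t / N(g))`. Since `B` varies slowly and `∑ N(g)⁻² = S` converges quickly,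
`S B(t) = 4 A(t) ^ 2 + O(log t)`, that is `B(t) = (4 π² / S) (log t) ^ 2 + O(log t)`.
-/

open Filter Asymptotics MeasureTheory Finset Real

local notation "ℤ[i]" => GaussianInt

section LatticePoints

/-- The half-open unit square with lower left corner `z`; these squares tile the plane, so that
counting lattice points amounts to measuring area. -/
def unitCell (z : ℤ[i]) : Set ℂ :=
  Set.Ico (z.re : ℝ) (z.re + 1) ×ℂ Set.Ico (z.im : ℝ) (z.im + 1)

lemma mem_unitCell_iff_floor {z : ℤ[i]} {u : ℂ} :
    u ∈ unitCell z ↔ ⌊u.re⌋ = z.re ∧ ⌊u.im⌋ = z.im := by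
  rw [unitCell, Complex.mem_reProdIm, Int.floor_eq_iff, Int.floor_eq_iff, Set.mem_Ico, Set.mem_Ico]

lemma unitCell_eq_preimage (z : ℤ[i]) : unitCell z = Complex.measurableEquivRealProd ⁻¹'
    (Set.Ico (z.re : ℝ) (z.re + 1) ×ˢ Set.Ico (z.im : ℝ) (z.im + 1)) :=
  rfl

lemma measurableSet_unitCell (z : ℤ[i]) : MeasurableSet (unitCell z) :=
  Complex.measurableEquivRealProd.measurable (measurableSet_Ico.prod measurableSet_Ico)

lemma volume_unitCell (z : ℤ[i]) : volume (unitCell z) = 1 := by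
  rw [unitCell_eq_preimage, Complex.volume_preserving_equiv_real_prod.measure_preimage
    (measurableSet_Ico.prod measurableSet_Ico).nullMeasurableSet,
    Measure.volume_eq_prod, Measure.prod_prod]
  simp

lemma disjoint_unitCell {z w : ℤ[i]} (h : z ≠ w) : Disjoint (unitCell z) (unitCell w) := by
  refine Set.disjoint_left.2 fun u hz hw => h ?_
  rw [mem_unitCell_iff_floor] at hz hw
  exact Zsqrtd.ext (hz.1.symm.trans hw.1) (hz.2.symm.trans hw.2)

lemma exists_mem_unitCell (u : ℂ) : ∃ z, u ∈ unitCell z :=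
  ⟨⟨⌊u.re⌋, ⌊u.im⌋⟩, mem_unitCell_iff_floor.2 ⟨rfl, rfl⟩⟩

lemma dist_le_two_of_mem_unitCell {z : ℤ[i]} {u : ℂ} (h : u ∈ unitCell z) :
    dist u (z : ℂ) ≤ 2 := by
  obtain ⟨⟨hre, hre'⟩, him, him'⟩ := Complex.mem_reProdIm.1 h
  rw [GaussianInt.intCast_re] at hre hre'
  rw [GaussianInt.intCast_im] at him him'
  calc dist u (z : ℂ) = ‖u - z‖ := dist_eq_norm _ _
    _ ≤ |(u - z).re| + |(u - z).im| := Complex.norm_le_abs_re_add_abs_im _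
    _ ≤ 1 + 1 := by
      rw [Complex.sub_re, Complex.sub_im]
      gcongr <;> exact abs_le.2 ⟨by linarith, by linarith⟩
    _ = 2 := by norm_num

lemma volume_real_biUnion_unitCell (F : Finset ℤ[i]) :
    volume.real (⋃ z ∈ F, unitCell z) = #F := by
  rw [measureReal_def, measure_biUnion_finset (fun _ _ _ _ => disjoint_unitCell)
    fun z _ => measurableSet_unitCell z]
  simp [volume_unitCell]

lemma volume_real_closedBall_complex (w : ℂ) {r : ℝ} (hr : 0 ≤ r) :
    volume.real (Metric.closedBall w r) = π * r ^ 2 := by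
  simp [measureReal_def, hr, mul_comm]

lemma finite_toComplex_preimage_closedBall (w : ℂ) (R : ℝ) :
    (GaussianInt.toComplex ⁻¹' Metric.closedBall w R).Finite := by
  obtain ⟨M, hM⟩ := exists_nat_ge (R + ‖w‖)
  have hinj : Function.Injective fun z : ℤ[i] => (z.re, z.im) := fun z z' h =>
    Zsqrtd.ext (congrArg Prod.fst h) (congrArg Prod.snd h)
  have hbox : (Set.Icc (-(M : ℤ)) M ×ˢ Set.Icc (-(M : ℤ)) M).Finite :=
    (Set.finite_Icc _ _).prod (Set.finite_Icc _ _)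
  refine (hbox.preimage hinj.injOn).subset fun z hz => ?_
  have hzM : ‖(z : ℂ)‖ ≤ M := by
    have : ‖(z : ℂ) - w‖ ≤ R := mem_closedBall_iff_norm.1 hz
    linarith [norm_le_norm_add_norm_sub' (z : ℂ) w]
  have hre := abs_le.1 ((Complex.abs_re_le_norm _).trans hzM)
  have him := abs_le.1 ((Complex.abs_im_le_norm _).trans hzM)
  rw [← GaussianInt.intCast_re] at hre
  rw [← GaussianInt.intCast_im] at him
  exact ⟨by exact_mod_cast hre, by exact_mod_cast him⟩

lemma card_le_of_subset_closedBall {F : Finset ℤ[i]} {w : ℂ} {R : ℝ} (hR : 0 ≤ R)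
    (hF : ∀ z ∈ F, (z : ℂ) ∈ Metric.closedBall w R) : (#F : ℝ) ≤ π * (R + 2) ^ 2 := by
  rw [← volume_real_biUnion_unitCell, ← volume_real_closedBall_complex w (by positivity)]
  refine measureReal_mono (Set.iUnion₂_subset fun z hz u hu => ?_) measure_closedBall_lt_top.ne
  have hzw : dist (z : ℂ) w ≤ R := hF z hz
  exact (dist_triangle u z w).trans (by linarith [dist_le_two_of_mem_unitCell hu])

lemma le_card_of_closedBall_subset {F : Finset ℤ[i]} {w : ℂ} {R : ℝ} (hR : 2 ≤ R)
    (hF : ∀ z : ℤ[i], (z : ℂ) ∈ Metric.closedBall w R → z ∈ F) : π * (R - 2) ^ 2 ≤ #F := by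
  rw [← volume_real_biUnion_unitCell, ← volume_real_closedBall_complex w (by linarith)]
  refine measureReal_mono (fun u hu => ?_) ?_
  · obtain ⟨z, hz⟩ := exists_mem_unitCell u
    refine Set.mem_iUnion₂.2 ⟨z, hF z ?_, hz⟩
    have huw : dist u w ≤ R - 2 := hu
    exact (dist_triangle_left (z : ℂ) w u).trans (by linarith [dist_le_two_of_mem_unitCell hz])
  · refine ((measure_biUnion_lt_top F.finite_toSet) fun z _ => ?_).ne
    simp [volume_unitCell]

theorem abs_ncard_toComplex_preimage_closedBall_sub_le (w : ℂ) {R : ℝ} (hR : 0 ≤ R) :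
    |((GaussianInt.toComplex ⁻¹' Metric.closedBall w R).ncard : ℝ) - π * R ^ 2|
      ≤ 16 * (R + 1) := by
  have hfin := finite_toComplex_preimage_closedBall w R
  rw [Set.ncard_eq_toFinset_card _ hfin]
  have hupper := card_le_of_subset_closedBall hR fun z => hfin.mem_toFinset.1
  have hpi := pi_lt_four
  have hpi0 := pi_pos
  refine abs_le.2 ⟨?_, by nlinarith⟩
  rcases le_total 2 R with h2 | h2
  · have hlower := le_card_of_closedBall_subset h2 fun z => hfin.mem_toFinset.2
    nlinarith
  · have : (0 : ℝ) ≤ #hfin.toFinset := by positivity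
    nlinarith [mul_nonneg hR hpi0.le]

end LatticePoints

section NormBall

/-- The norm of a Gaussian integer as a natural number, bundled so that multiplicativity comes from
the `MonoidWithZeroHom` API and nonnegativity of its real cast is automatic. -/
def absNorm : ℤ[i] →*₀ ℕ where
  toFun z := z.norm.natAbs
  map_zero' := by simp
  map_one' := by simp
  map_mul' z w := by rw [Zsqrtd.norm_mul, Int.natAbs_mul]

lemma cast_absNorm (z : ℤ[i]) : (absNorm z : ℝ) = z.norm :=
  GaussianInt.natCast_natAbs_norm z

lemma cast_absNorm_eq_norm_sq (z : ℤ[i]) : (absNorm z : ℝ) = ‖(z : ℂ)‖ ^ 2 := by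
  rw [cast_absNorm, GaussianInt.intCast_real_norm, Complex.normSq_eq_norm_sq]

lemma absNorm_neg (z : ℤ[i]) : absNorm (-z) = absNorm z :=
  congrArg Int.natAbs (Zsqrtd.norm_neg z)

lemma absNorm_eq_zero {z : ℤ[i]} : absNorm z = 0 ↔ z = 0 :=
  Int.natAbs_eq_zero.trans GaussianInt.norm_eq_zero

lemma absNorm_pos {z : ℤ[i]} : 0 < absNorm z ↔ z ≠ 0 :=
  Nat.pos_iff_ne_zero.trans absNorm_eq_zero.not

lemma absNorm_le_of_dvd {z w : ℤ[i]} (hw : w ≠ 0) (h : z ∣ w) : absNorm z ≤ absNorm w :=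
  Nat.le_of_dvd (absNorm_pos.2 hw) (map_dvd absNorm h)

lemma cast_absNorm_le_iff_mem_closedBall {z : ℤ[i]} {t : ℝ} (ht : 0 ≤ t) :
    (absNorm z : ℝ) ≤ t ↔ (z : ℂ) ∈ Metric.closedBall 0 √t := by
  rw [mem_closedBall_zero_iff, Real.le_sqrt (norm_nonneg _) ht, cast_absNorm_eq_norm_sq]

lemma finite_setOf_absNorm_le (t : ℝ) : {z : ℤ[i] | (absNorm z : ℝ) ≤ t}.Finite := by
  refine (finite_toComplex_preimage_closedBall 0 √t).subset fun z hz => ?_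
  exact (cast_absNorm_le_iff_mem_closedBall ((Nat.cast_nonneg _).trans hz)).1 hz

/-- The nonzero Gaussian integers of norm at most `t`. -/
noncomputable def normBall (t : ℝ) : Finset ℤ[i] :=
  (finite_setOf_absNorm_le t).toFinset.erase 0

@[simp]
lemma mem_normBall {t : ℝ} {z : ℤ[i]} : z ∈ normBall t ↔ z ≠ 0 ∧ (absNorm z : ℝ) ≤ t := by
  simp [normBall]

lemma normBall_mono : Monotone normBall := fun s t hst z => by
  simpa only [mem_normBall] using And.imp_right (·.trans hst)

lemma normBall_eq_empty {t : ℝ} (ht : t < 1) : normBall t = ∅ := by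
  refine eq_empty_of_forall_notMem fun z hz => ?_
  obtain ⟨hz0, hzt⟩ := mem_normBall.1 hz
  have : (1 : ℝ) ≤ absNorm z := by exact_mod_cast absNorm_pos.2 hz0
  linarith

theorem abs_card_normBall_sub_le {t : ℝ} (ht : 0 ≤ t) :
    |(#(normBall t) : ℝ) - π * t| ≤ 33 * √t := by
  rcases lt_or_ge t 1 with ht1 | ht1
  · rw [normBall_eq_empty ht1, card_empty, Nat.cast_zero, zero_sub, abs_neg,
      abs_of_nonneg (by positivity)]
    have : t ≤ √t := Real.le_sqrt_of_sq_le (by nlinarith)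
    nlinarith [pi_lt_four, pi_pos]
  have hcount := abs_ncard_toComplex_preimage_closedBall_sub_le 0 (sqrt_nonneg t)
  have hball : GaussianInt.toComplex ⁻¹' Metric.closedBall 0 √t = insert 0 (normBall t) := by
    ext z
    rw [Set.mem_preimage, ← cast_absNorm_le_iff_mem_closedBall ht, mem_coe, Finset.mem_insert,
      mem_normBall]
    rcases eq_or_ne z 0 with rfl | hz
    · simpa using ht
    · simp [hz]
  rw [hball, Set.ncard_coe_finset, card_insert_of_notMem (by simp), Real.sq_sqrt ht]
    at hcount
  have : 1 ≤ √t := Real.one_le_sqrt.2 ht1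
  push_cast at hcount
  rw [abs_le] at hcount ⊢
  constructor <;> linarith

lemma card_normBall_isBigO : (fun t => (#(normBall t) : ℝ)) =O[atTop] fun t => t := by
  refine IsBigO.of_bound (π + 33) ?_
  filter_upwards [eventually_ge_atTop 1] with t ht
  have hsqrt : √t ≤ t := Real.sqrt_le_iff.2 ⟨by linarith, by nlinarith⟩
  have := (abs_le.1 (abs_card_normBall_sub_le (zero_le_one.trans ht))).2
  rw [norm_of_nonneg (by positivity), norm_of_nonneg (by positivity)]
  linarith

theorem abs_ncard_residueClass_sub_le {m : ℤ[i]} (hm : m ≠ 0) (r : ℤ[i]) {t : ℝ} (ht : 0 ≤ t) :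
    |({x : ℤ[i] | m ∣ x - r ∧ (absNorm x : ℝ) ≤ t}.ncard : ℝ) - π * (t / absNorm m)|
      ≤ 16 * (√(t / absNorm m) + 1) := by
  have hmC : (m : ℂ) ≠ 0 := GaussianInt.toComplex_eq_zero.not.2 hm
  have hmN : (0 : ℝ) < absNorm m := by exact_mod_cast absNorm_pos.2 hm
  have hmem (z : ℤ[i]) : (absNorm (r + m * z) : ℝ) ≤ t ↔
      (z : ℂ) ∈ Metric.closedBall (-(r : ℂ) / m) √(t / absNorm m) := by
    have hscale : (absNorm (r + m * z) : ℝ) = ‖(z : ℂ) - -(r : ℂ) / m‖ ^ 2 * absNorm m := by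
      rw [cast_absNorm_eq_norm_sq, cast_absNorm_eq_norm_sq, ← mul_pow, ← norm_mul, sub_mul,
        div_mul_cancel₀ _ hmC, map_add, map_mul]
      ring_nf
    rw [mem_closedBall_iff_norm, Real.le_sqrt (norm_nonneg _) (by positivity), le_div_iff₀ hmN,
      hscale]
  have himage : {x : ℤ[i] | m ∣ x - r ∧ (absNorm x : ℝ) ≤ t} = (fun z => r + m * z) ''
      (GaussianInt.toComplex ⁻¹' Metric.closedBall (-(r : ℂ) / m) √(t / absNorm m)) := by
    ext x
    constructor
    · rintro ⟨⟨z, hz⟩, hx⟩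
      obtain rfl : x = r + m * z := by rw [← hz]; ring
      exact ⟨z, (hmem z).1 hx, rfl⟩
    · rintro ⟨z, hz, rfl⟩
      exact ⟨⟨z, by ring⟩, (hmem z).2 hz⟩
  have hinj : Function.Injective fun z : ℤ[i] => r + m * z :=
    (add_right_injective r).comp (mul_right_injective₀ hm)
  rw [himage, Set.ncard_image_of_injective _ hinj]
  have := abs_ncard_toComplex_preimage_closedBall_sub_le (-(r : ℂ) / m)
    (sqrt_nonneg (t / absNorm m))
  rwa [Real.sq_sqrt (by positivity)] at this

end NormBall

section InvNormSum

lemma sum_increment_div_eq (c : ℕ → ℝ) (hc : c 0 = 0) (κ : ℝ) (n : ℕ) :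
    ∑ k ∈ range n, (c (k + 1) - c k) / (k + 1) = κ * harmonic n + (c n - κ * n) / (n + 1)
      + ∑ k ∈ range n, (c (k + 1) - κ * (k + 1 : ℕ)) / ((k + 1 : ℕ) * ((k + 1 : ℕ) + 1)) := by
  induction n with
  | zero => simp [hc]
  | succ n ih =>
    rw [sum_range_succ, ih, sum_range_succ, harmonic_succ]
    push_cast
    field_simp
    ring

lemma abs_div_mul_add_one_le {e K x : ℝ} (hx : 0 < x) (h : |e| ≤ K * √x) :
    |e / (x * (x + 1))| ≤ K * (1 / x ^ (3 / 2 : ℝ)) := by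
  have hpow : √x * x ^ (3 / 2 : ℝ) = x ^ 2 := by
    rw [Real.sqrt_eq_rpow, ← Real.rpow_add hx]
    norm_num
  have hK : 0 ≤ K := nonneg_of_mul_nonneg_left ((abs_nonneg e).trans h) (Real.sqrt_pos.2 hx)
  rw [abs_div, abs_of_pos (by positivity : 0 < x * (x + 1)), div_le_iff₀ (by positivity),
    mul_one_div, div_mul_eq_mul_div, le_div_iff₀ (by positivity)]
  calc |e| * x ^ (3 / 2 : ℝ) ≤ K * √x * x ^ (3 / 2 : ℝ) := by gcongr
    _ = K * x ^ 2 := by rw [mul_assoc, hpow]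
    _ ≤ K * (x * (x + 1)) := by gcongr; nlinarith

theorem exists_abs_sum_increment_div_sub_le {c : ℕ → ℝ} {κ K : ℝ}
    (h : ∀ n, |c n - κ * n| ≤ K * √n) :
    ∃ C, ∀ n, |∑ k ∈ range n, (c (k + 1) - c k) / (k + 1) - κ * harmonic n| ≤ C := by
  have hc : c 0 = 0 := by simpa using h 0
  have hK : 0 ≤ K := by simpa using (abs_nonneg _).trans (h 1)
  have hsummable : Summable fun k : ℕ => 1 / ((k + 1 : ℕ) : ℝ) ^ (3 / 2 : ℝ) :=
    (summable_nat_add_iff 1).2 (Real.summable_one_div_nat_rpow.2 (by norm_num))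
  refine ⟨K + K * ∑' k : ℕ, 1 / ((k + 1 : ℕ) : ℝ) ^ (3 / 2 : ℝ), fun n => ?_⟩
  have hboundary : |(c n - κ * n) / (n + 1)| ≤ K := by
    have hsqrt : √(n : ℝ) ≤ n + 1 :=
      Real.sqrt_le_iff.2 ⟨by positivity, by nlinarith [n.cast_nonneg (α := ℝ)]⟩
    rw [abs_div, abs_of_pos (by positivity : (0 : ℝ) < n + 1), div_le_iff₀ (by positivity)]
    exact (h n).trans (by gcongr)
  rw [sum_increment_div_eq c hc κ, add_assoc, add_sub_cancel_left]
  refine (abs_add_le _ _).trans (add_le_add hboundary ((abs_sum_le_sum_abs _ _).trans ?_))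
  calc ∑ k ∈ range n, |(c (k + 1) - κ * (k + 1 : ℕ)) / ((k + 1 : ℕ) * ((k + 1 : ℕ) + 1))|
      ≤ ∑ k ∈ range n, K * (1 / ((k + 1 : ℕ) : ℝ) ^ (3 / 2 : ℝ)) :=
        sum_le_sum fun k _ => abs_div_mul_add_one_le (by positivity) (h (k + 1))
    _ ≤ K * ∑' k : ℕ, 1 / ((k + 1 : ℕ) : ℝ) ^ (3 / 2 : ℝ) := by
        rw [← mul_sum]
        gcongr
        exact hsummable.sum_le_tsum _ fun k _ => by positivity

/-- The sum of `1 / N(a)` over the nonzero Gaussian integers `a` of norm at most `t`. -/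
noncomputable def invNormSum (t : ℝ) : ℝ :=
  ∑ a ∈ normBall t, 1 / (absNorm a : ℝ)

lemma invNormSum_nonneg (t : ℝ) : 0 ≤ invNormSum t :=
  sum_nonneg fun _ _ => by positivity

lemma invNormSum_mono : Monotone invNormSum := fun _ _ hst =>
  sum_le_sum_of_subset_of_nonneg (normBall_mono hst) fun _ _ _ => by positivity

lemma invNormSum_eq_zero {t : ℝ} (ht : t < 1) : invNormSum t = 0 := by
  rw [invNormSum, normBall_eq_empty ht, sum_empty]

lemma normBall_natFloor {t : ℝ} (ht : 0 ≤ t) : normBall ⌊t⌋₊ = normBall t := by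
  ext z
  rw [mem_normBall, mem_normBall, Nat.cast_le, Nat.le_floor_iff ht]

lemma invNormSum_add_one_sub (n : ℕ) :
    invNormSum (n + 1) - invNormSum n = (#(normBall (n + 1)) - #(normBall n)) / (n + 1) := by
  have hsub : normBall n ⊆ normBall (n + 1) := normBall_mono (by linarith)
  have hnorm : ∀ z ∈ normBall (n + 1) \ normBall n, 1 / (absNorm z : ℝ) = 1 / (n + 1) := by
    intro z hz
    rw [Finset.mem_sdiff, mem_normBall, mem_normBall] at hz
    norm_cast at hz ⊢
    congr 2
    grind
  rw [invNormSum, invNormSum, ← sum_sdiff hsub, add_sub_cancel_right, sum_congr rfl hnorm,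
    sum_const, nsmul_eq_mul, mul_one_div, cast_card_sdiff hsub]

lemma invNormSum_natCast (n : ℕ) : invNormSum n =
    ∑ k ∈ range n, ((#(normBall (k + 1 : ℕ)) : ℝ) - #(normBall k)) / (k + 1) := by
  have hzero : invNormSum (0 : ℕ) = 0 := invNormSum_eq_zero (by simp)
  rw [← sub_zero (invNormSum n), ← hzero, ← sum_range_sub fun k : ℕ => invNormSum k]
  refine sum_congr rfl fun k _ => ?_
  push_cast
  exact invNormSum_add_one_sub k

theorem exists_abs_invNormSum_sub_log_le :
    ∃ C, ∀ t, 1 ≤ t → |invNormSum t - π * log t| ≤ C := by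
  obtain ⟨C, hC⟩ := exists_abs_sum_increment_div_sub_le (c := fun n : ℕ => (#(normBall n) : ℝ))
    fun n => abs_card_normBall_sub_le n.cast_nonneg
  refine ⟨C + π, fun t ht => ?_⟩
  have hharmonic : |(harmonic ⌊t⌋₊ : ℝ) - log t| ≤ 1 := abs_le.2
    ⟨by linarith [log_le_harmonic_floor t (by linarith)],
      by linarith [harmonic_floor_le_one_add_log t ht]⟩
  have hsum := hC ⌊t⌋₊
  rw [← invNormSum_natCast, invNormSum, normBall_natFloor (by linarith), ← invNormSum] at hsum
  calc |invNormSum t - π * log t|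
      ≤ |invNormSum t - π * harmonic ⌊t⌋₊| + |π * harmonic ⌊t⌋₊ - π * log t| :=
        abs_sub_le _ _ _
    _ ≤ C + π * 1 := by
        rw [← mul_sub, abs_mul, abs_of_pos pi_pos]
        gcongr
    _ = C + π := by rw [mul_one]

lemma exists_invNormSum_sub_div_le : ∃ C, ∀ t, 1 ≤ t → ∀ s, 1 ≤ s →
    invNormSum t - invNormSum (t / s) ≤ C + π * log s := by
  obtain ⟨C, hC⟩ := exists_abs_invNormSum_sub_log_le
  refine ⟨2 * C, fun t ht s hs => ?_⟩
  have hC0 : 0 ≤ C := (abs_nonneg _).trans (hC 1 le_rfl)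
  have hupper := (abs_le.1 (hC t ht)).2
  rcases lt_or_ge (t / s) 1 with hts | hts
  · have : log t ≤ log s := log_le_log (by linarith) ((div_lt_one (by linarith)).1 hts).le
    rw [invNormSum_eq_zero hts]
    nlinarith [pi_pos]
  · have hlower := (abs_le.1 (hC _ hts)).1
    rw [log_div (by linarith) (by linarith)] at hlower
    linarith

lemma invNormSum_sub_log_isBigO :
    (fun t => invNormSum t - π * log t) =O[atTop] fun _ => (1 : ℝ) := by
  obtain ⟨C, hC⟩ := exists_abs_invNormSum_sub_log_le
  refine IsBigO.of_bound C ?_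
  filter_upwards [eventually_ge_atTop 1] with t ht
  simpa using hC t ht

lemma one_isBigO_log : (fun _ => (1 : ℝ)) =O[atTop] log :=
  (isLittleO_const_log_atTop (c := 1)).isBigO

lemma invNormSum_isBigO_log : invNormSum =O[atTop] log := by
  simpa using (invNormSum_sub_log_isBigO.trans one_isBigO_log).add
    ((isBigO_refl log atTop).const_mul_left π)

end InvNormSum

section CommonGenerators

variable {R : Type*} [CommRing R] [IsDomain R]

lemma span_singleton_eq_span_pair_mul_iff {g : R} (hg : g ≠ 0) (a c : R) :
    Ideal.span {g} = Ideal.span {g * a, g * c} ↔ IsCoprime a c := by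
  have hmul : Ideal.span {g * a, g * c} = Ideal.span {g} * Ideal.span {a, c} := by
    rw [Ideal.span_mul_span', Set.singleton_mul, Set.image_pair]
  rw [hmul, eq_comm, ← Ideal.mul_top (Ideal.span {g}), mul_assoc, Ideal.top_mul,
    Ideal.span_singleton_mul_right_inj hg, Ideal.eq_top_iff_one, Ideal.mem_span_pair]
  rfl

lemma ncard_setOf_span_singleton_eq {g : R} (hg : g ≠ 0) :
    {h : R | Ideal.span {h} = Ideal.span {g}}.ncard = Nat.card Rˣ := by
  have hrange : {h : R | Ideal.span {h} = Ideal.span {g}} = Set.range fun u : Rˣ => g * u := by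
    ext h
    rw [Set.mem_ofPred_eq, eq_comm, Ideal.span_singleton_eq_span_singleton]
    rfl
  rw [hrange]
  exact Set.ncard_range_of_injective ((mul_right_injective₀ hg).comp Units.val_injective)

theorem ncard_setOf_span_singleton_eq_span_pair [IsPrincipalIdealRing R] {x : R} (hx : x ≠ 0)
    (y : R) : {g : R | Ideal.span {g} = Ideal.span {x, y}}.ncard = Nat.card Rˣ := by
  obtain ⟨g, hg⟩ := (IsPrincipalIdealRing.principal (Ideal.span {x, y})).principal
  rw [Ideal.submodule_span_eq] at hg
  rw [hg]
  refine ncard_setOf_span_singleton_eq fun hg0 => hx ?_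
  rw [hg0, Ideal.span_singleton_eq_bot.2 rfl] at hg
  exact (Ideal.mem_bot).1 (hg ▸ Ideal.subset_span (Set.mem_insert x {y}))

end CommonGenerators

section CoprimePairs

theorem card_units_gaussianInt : Nat.card ℤ[i]ˣ = 4 := by
  have hunits : {z : ℤ[i] | IsUnit z} = ({1, -1, ⟨0, 1⟩, ⟨0, -1⟩} : Finset ℤ[i]) := by
    ext ⟨x, y⟩
    rw [Set.mem_ofPred_eq, ← Zsqrtd.norm_eq_one_iff, mem_coe]
    constructor
    · intro h
      have hnorm : x * x + y * y = 1 := by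
        have hcast : |x * x + y * y| = 1 := by
          simpa [Zsqrtd.norm_def] using congrArg (Nat.cast : ℕ → ℤ) h
        rwa [abs_of_nonneg (add_nonneg (mul_self_nonneg x) (mul_self_nonneg y))] at hcast
      obtain ⟨hx, hx'⟩ : -1 ≤ x ∧ x ≤ 1 := ⟨by nlinarith, by nlinarith⟩
      obtain ⟨hy, hy'⟩ : -1 ≤ y ∧ y ≤ 1 := ⟨by nlinarith, by nlinarith⟩
      interval_cases x <;> interval_cases y <;> revert hnorm <;> decide
    · simp only [Finset.mem_insert, Finset.mem_singleton]
      rintro (h | h | h | h) <;> rw [h] <;> decide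
  calc Nat.card ℤ[i]ˣ = (Set.range ((↑) : ℤ[i]ˣ → ℤ[i])).ncard :=
        (Set.ncard_range_of_injective Units.val_injective).symm
    _ = {z : ℤ[i] | IsUnit z}.ncard := rfl
    _ = 4 := by rw [hunits, Set.ncard_coe_finset]; decide

open Classical in
/-- The pairs of coprime nonzero Gaussian integers of norm at most `t`. -/
noncomputable def coprimePairs (t : ℝ) : Finset (ℤ[i] × ℤ[i]) :=
  (normBall t ×ˢ normBall t).filter fun p => IsCoprime p.1 p.2

@[simp]
lemma mem_coprimePairs {t : ℝ} {p : ℤ[i] × ℤ[i]} :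
    p ∈ coprimePairs t ↔ (p.1 ∈ normBall t ∧ p.2 ∈ normBall t) ∧ IsCoprime p.1 p.2 := by
  simp only [coprimePairs, mem_filter, mem_product]

/-- The sum of `1 / (N(a) * N(c))` over the coprime pairs `(a, c)` of norms at most `t`. -/
noncomputable def coprimeInvNormSum (t : ℝ) : ℝ :=
  ∑ p ∈ coprimePairs t, 1 / ((absNorm p.1 : ℝ) * absNorm p.2)

lemma invNormSum_sq (t : ℝ) :
    invNormSum t ^ 2 = ∑ p ∈ normBall t ×ˢ normBall t, 1 / ((absNorm p.1 : ℝ) * absNorm p.2) := by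
  simp only [invNormSum, sq, sum_mul_sum, sum_product, one_div_mul_one_div]

lemma mul_mem_normBall_iff {g z : ℤ[i]} (hg : g ≠ 0) {t : ℝ} :
    g * z ∈ normBall t ↔ z ∈ normBall (t / absNorm g) := by
  have hgN : (0 : ℝ) < absNorm g := by exact_mod_cast absNorm_pos.2 hg
  rw [mem_normBall, mem_normBall, map_mul, Nat.cast_mul, le_div_iff₀' hgN, mul_ne_zero_iff,
    and_iff_right hg]

open Classical in
lemma card_filter_span_singleton_eq_span_pair {t : ℝ} {x : ℤ[i]} (hx : x ∈ normBall t)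
    (y : ℤ[i]) : #{g ∈ normBall t | Ideal.span {g} = Ideal.span {x, y}} = 4 := by
  obtain ⟨hx0, hxt⟩ := mem_normBall.1 hx
  rw [← card_units_gaussianInt, ← ncard_setOf_span_singleton_eq_span_pair hx0 y,
    ← Set.ncard_coe_finset, coe_filter]
  congr 1
  ext g
  refine and_iff_right_of_imp fun hg => mem_normBall.2 ?_
  have hgx : g ∣ x :=
    Ideal.mem_span_singleton.1 (hg ▸ Ideal.subset_span (Set.mem_insert x {y}))
  refine ⟨ne_zero_of_dvd_ne_zero hx0 hgx, le_trans ?_ hxt⟩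
  exact_mod_cast absNorm_le_of_dvd hx0 hgx

open Classical in
lemma sum_filter_span_singleton_eq_span_pair {t : ℝ} {g : ℤ[i]} (hg : g ≠ 0) :
    ∑ p ∈ normBall t ×ˢ normBall t with Ideal.span {g} = Ideal.span {p.1, p.2},
      1 / ((absNorm p.1 : ℝ) * absNorm p.2)
      = 1 / (absNorm g : ℝ) ^ 2 * coprimeInvNormSum (t / absNorm g) := by
  rw [coprimeInvNormSum, mul_sum]
  refine (sum_bij (fun p _ => (g * p.1, g * p.2)) (fun p hp => ?_) (fun p _ q _ hpq => ?_)
    (fun p hp => ?_) fun p _ => ?_).symm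
  · rw [mem_coprimePairs, ← mul_mem_normBall_iff hg, ← mul_mem_normBall_iff hg] at hp
    exact mem_filter.2 ⟨mem_product.2 hp.1, (span_singleton_eq_span_pair_mul_iff hg _ _).2 hp.2⟩
  · rw [Prod.mk.injEq] at hpq
    exact Prod.ext (mul_left_cancel₀ hg hpq.1) (mul_left_cancel₀ hg hpq.2)
  · obtain ⟨x, y⟩ := p
    obtain ⟨hmem, hspan⟩ := mem_filter.1 hp
    have hdvd {z : ℤ[i]} (hz : z ∈ ({x, y} : Set ℤ[i])) : g ∣ z :=
      Ideal.mem_span_singleton.1 (hspan ▸ Ideal.subset_span hz)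
    obtain ⟨a, rfl⟩ := hdvd (Set.mem_insert x {y})
    obtain ⟨c, rfl⟩ := hdvd (Set.mem_insert_of_mem _ rfl)
    rw [mem_product, mul_mem_normBall_iff hg, mul_mem_normBall_iff hg] at hmem
    exact ⟨(a, c), mem_coprimePairs.2
      ⟨hmem, (span_singleton_eq_span_pair_mul_iff hg a c).1 hspan⟩, rfl⟩
  · simp only [map_mul, Nat.cast_mul, one_div_mul_one_div]
    ring_nf

open Classical in
theorem four_mul_invNormSum_sq (t : ℝ) : 4 * invNormSum t ^ 2 =
    ∑ g ∈ normBall t, 1 / (absNorm g : ℝ) ^ 2 * coprimeInvNormSum (t / absNorm g) := by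
  calc 4 * invNormSum t ^ 2
      = ∑ p ∈ normBall t ×ˢ normBall t,
          ∑ g ∈ normBall t with Ideal.span {g} = Ideal.span {p.1, p.2},
            1 / ((absNorm p.1 : ℝ) * absNorm p.2) := by
        rw [invNormSum_sq, mul_sum]
        refine sum_congr rfl fun p hp => ?_
        rw [sum_const, card_filter_span_singleton_eq_span_pair (mem_product.1 hp).1,
          nsmul_eq_mul, Nat.cast_ofNat]
    _ = ∑ g ∈ normBall t,
          ∑ p ∈ normBall t ×ˢ normBall t with Ideal.span {g} = Ideal.span {p.1, p.2},
            1 / ((absNorm p.1 : ℝ) * absNorm p.2) := by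
        simp only [sum_filter]
        exact sum_comm
    _ = _ := sum_congr rfl fun g hg =>
        sum_filter_span_singleton_eq_span_pair (mem_normBall.1 hg).1

end CoprimePairs

section CoprimeAsymptotics

lemma summable_absNorm_rpow {s : ℝ} (hs : 1 < s) :
    Summable fun z : ℤ[i] => (absNorm z : ℝ) ^ (-s) := by
  have hinj : Function.Injective fun z : ℤ[i] => ![z.im, z.re] := fun z w h =>
    Zsqrtd.ext (congrFun h 1) (congrFun h 0)
  have hsummable := (EisensteinSeries.summable_one_div_norm_rpow (k := 2 * s)
    (by linarith)).comp_injective hinj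
  refine Summable.of_nonneg_of_le (fun z => by positivity) (fun z => ?_)
    (hsummable.mul_left (EisensteinSeries.r UpperHalfPlane.I ^ (-(2 * s))))
  have hz : ((![z.im, z.re] 0 : ℤ) : ℂ) * UpperHalfPlane.I + (![z.im, z.re] 1 : ℤ) = z := by
    simp [GaussianInt.toComplex_def, add_comm]
  have hbound := EisensteinSeries.summand_bound UpperHalfPlane.I (k := 2 * s) (by linarith)
    ![z.im, z.re]
  rw [hz, ← mul_neg, Real.rpow_mul (norm_nonneg _), Real.rpow_two,
    ← cast_absNorm_eq_norm_sq] at hbound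
  rwa [← mul_neg]

lemma hasSum_SGauss : HasSum (fun z : ℤ[i] => 1 / (absNorm z : ℝ) ^ 2) SGauss := by
  have hsummable : Summable fun z : ℤ[i] => 1 / (absNorm z : ℝ) ^ 2 := by
    refine (summable_absNorm_rpow one_lt_two).congr fun z => ?_
    rw [Real.rpow_neg (Nat.cast_nonneg _), Real.rpow_two, one_div]
  have hsupport : Function.support (fun z : ℤ[i] => 1 / (absNorm z : ℝ) ^ 2) ⊆ {z | z ≠ 0} := by
    rintro z hz rfl
    simp at hz
  have hSGauss : SGauss = ∑' z : ℤ[i], 1 / (absNorm z : ℝ) ^ 2 := by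
    rw [← tsum_subtype_eq_of_support_subset hsupport]
    simp only [SGauss, cast_absNorm, one_div]
    rfl
  rw [hSGauss]
  exact hsummable.hasSum

lemma SGauss_pos : 0 < SGauss :=
  hasSum_SGauss.tsum_eq ▸
    hasSum_SGauss.summable.tsum_pos (fun z => by positivity) 1 (by simp)

lemma coprimeInvNormSum_eq_zero {t : ℝ} (ht : t < 1) : coprimeInvNormSum t = 0 := by
  simp [coprimeInvNormSum, coprimePairs, normBall_eq_empty ht]

open Classical in
lemma abs_coprimeInvNormSum_sub_le {s t : ℝ} (hst : s ≤ t) :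
    |coprimeInvNormSum t - coprimeInvNormSum s| ≤ invNormSum t ^ 2 - invNormSum s ^ 2 := by
  have hball := normBall_mono hst
  have hpairs : coprimePairs s ⊆ coprimePairs t := fun p hp => by
    rw [mem_coprimePairs] at hp ⊢
    exact ⟨⟨hball hp.1.1, hball hp.1.2⟩, hp.2⟩
  rw [invNormSum_sq, invNormSum_sq, coprimeInvNormSum, coprimeInvNormSum, ← sum_sdiff hpairs,
    ← sum_sdiff (product_subset_product hball hball), add_sub_cancel_right, add_sub_cancel_right,
    abs_of_nonneg (sum_nonneg fun _ _ => by positivity)]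
  refine sum_le_sum_of_subset_of_nonneg (fun p => ?_) fun _ _ _ => by positivity
  simp only [Finset.mem_sdiff, mem_coprimePairs, mem_product]
  tauto

lemma hasSum_coprimeInvNormSum_div (t : ℝ) :
    HasSum (fun g : ℤ[i] => 1 / (absNorm g : ℝ) ^ 2 * coprimeInvNormSum (t / absNorm g))
      (4 * invNormSum t ^ 2) := by
  rw [four_mul_invNormSum_sq]
  refine hasSum_sum_of_ne_finset_zero fun g hg => ?_
  rcases eq_or_ne g 0 with rfl | hg0
  · simp
  have hgt : t < absNorm g := by simpa [hg0] using hg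
  have hgN : (0 : ℝ) < absNorm g := by exact_mod_cast absNorm_pos.2 hg0
  rw [coprimeInvNormSum_eq_zero ((div_lt_one hgN).2 hgt), mul_zero]

lemma exists_abs_coprimeInvNormSum_sub_div_le : ∃ C, ∀ t, 1 ≤ t → ∀ s, 1 ≤ s →
    |coprimeInvNormSum t - coprimeInvNormSum (t / s)| ≤ C * invNormSum t * √s := by
  obtain ⟨C, hC⟩ := exists_invNormSum_sub_div_le
  have hC0 : 0 ≤ C := by simpa using hC 1 le_rfl 1 le_rfl
  refine ⟨2 * (C + 2 * π), fun t ht s hs => ?_⟩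
  have hdiv : t / s ≤ t := div_le_self (by linarith) hs
  have hmono := invNormSum_mono hdiv
  have hgrowth : invNormSum t - invNormSum (t / s) ≤ (C + 2 * π) * √s := by
    have hsqrt : 1 ≤ √s := Real.one_le_sqrt.2 hs
    have hlog : log s ≤ 2 * √s := by
      have := Real.log_le_sub_one_of_pos (Real.sqrt_pos.2 (by linarith : 0 < s))
      rw [Real.log_sqrt (by linarith)] at this
      linarith
    nlinarith [hC t ht s hs, pi_pos]
  calc |coprimeInvNormSum t - coprimeInvNormSum (t / s)|
      ≤ invNormSum t ^ 2 - invNormSum (t / s) ^ 2 := abs_coprimeInvNormSum_sub_le hdiv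
    _ = (invNormSum t + invNormSum (t / s)) * (invNormSum t - invNormSum (t / s)) := by ring
    _ ≤ (invNormSum t + invNormSum t) * ((C + 2 * π) * √s) :=
        mul_le_mul (by gcongr) hgrowth (sub_nonneg.2 hmono)
          (add_nonneg (invNormSum_nonneg t) (invNormSum_nonneg t))
    _ = 2 * (C + 2 * π) * invNormSum t * √s := by ring

lemma exists_abs_SGauss_mul_coprimeInvNormSum_sub_le : ∃ K, ∀ t, 1 ≤ t →
    |SGauss * coprimeInvNormSum t - 4 * invNormSum t ^ 2| ≤ K * invNormSum t := by
  obtain ⟨C, hC⟩ := exists_abs_coprimeInvNormSum_sub_div_le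
  refine ⟨C * ∑' z : ℤ[i], (absNorm z : ℝ) ^ (-(3 / 2 : ℝ)), fun t ht => ?_⟩
  have hdiff : HasSum (fun z : ℤ[i] => 1 / (absNorm z : ℝ) ^ 2 *
      (coprimeInvNormSum t - coprimeInvNormSum (t / absNorm z)))
      (SGauss * coprimeInvNormSum t - 4 * invNormSum t ^ 2) := by
    simpa only [mul_sub] using
      (hasSum_SGauss.mul_right (coprimeInvNormSum t)).sub (hasSum_coprimeInvNormSum_div t)
  have hterm (z : ℤ[i]) : ‖1 / (absNorm z : ℝ) ^ 2 *
      (coprimeInvNormSum t - coprimeInvNormSum (t / absNorm z))‖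
      ≤ C * invNormSum t * (absNorm z : ℝ) ^ (-(3 / 2 : ℝ)) := by
    rcases eq_or_ne z 0 with rfl | hz
    · simp
    have hN : (1 : ℝ) ≤ absNorm z := by exact_mod_cast absNorm_pos.2 hz
    have hpow : 1 / (absNorm z : ℝ) ^ 2 * √(absNorm z) = (absNorm z : ℝ) ^ (-(3 / 2 : ℝ)) := by
      rw [one_div, ← Real.rpow_two, ← Real.rpow_neg (by linarith), Real.sqrt_eq_rpow,
        ← Real.rpow_add (by linarith)]
      norm_num
    rw [norm_mul, Real.norm_of_nonneg (by positivity), Real.norm_eq_abs, ← hpow, mul_left_comm]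
    gcongr
    exact hC t ht _ hN
  have hbound := tsum_of_norm_bounded
    ((summable_absNorm_rpow (s := 3 / 2) (by norm_num)).hasSum.mul_left (C * invNormSum t)) hterm
  rwa [hdiff.tsum_eq, Real.norm_eq_abs, mul_right_comm] at hbound

lemma invNormSum_sq_sub_isBigO :
    (fun t => invNormSum t ^ 2 - (π * log t) ^ 2) =O[atTop] log := by
  have hadd : (fun t => invNormSum t + π * log t) =O[atTop] log :=
    invNormSum_isBigO_log.add ((isBigO_refl log atTop).const_mul_left π)
  simpa only [sq_sub_sq, mul_one] using hadd.mul invNormSum_sub_log_isBigO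

theorem coprimeInvNormSum_sub_isBigO :
    (fun t => coprimeInvNormSum t - 4 * π ^ 2 / SGauss * log t ^ 2) =O[atTop] log := by
  obtain ⟨K, hK⟩ := exists_abs_SGauss_mul_coprimeInvNormSum_sub_le
  have hsort : (fun t => SGauss * coprimeInvNormSum t - 4 * invNormSum t ^ 2) =O[atTop] log := by
    refine (IsBigO.of_bound K ?_).trans invNormSum_isBigO_log
    filter_upwards [eventually_ge_atTop 1] with t ht
    simpa only [Real.norm_eq_abs, abs_of_nonneg (invNormSum_nonneg t)] using hK t ht
  refine ((hsort.add (invNormSum_sq_sub_isBigO.const_mul_left 4)).const_mul_left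
    SGauss⁻¹).congr_left fun t => ?_
  have := SGauss_pos
  field

end CoprimeAsymptotics

section HyperbolaMethod

open Classical in
/-- The nonzero divisors of `x` of norm at most `t`. -/
noncomputable def smallDivisors (t : ℝ) (x : ℤ[i]) : Finset ℤ[i] :=
  {a ∈ normBall t | a ∣ x}

open Classical in
/-- The divisors of `x ≠ 0` whose codivisor has norm at most `t`; the bound on the codivisor is
written without division. -/
noncomputable def largeDivisors (t : ℝ) (x : ℤ[i]) : Finset ℤ[i] :=
  {a ∈ normBall (absNorm x) | a ∣ x ∧ (absNorm x : ℝ) ≤ t * absNorm a}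

/-- The divisors of `x ≠ 0` for which both the divisor and its codivisor have norm at most `t`,
which the hyperbola method counts twice. -/
noncomputable def balancedDivisors (t : ℝ) (x : ℤ[i]) : Finset ℤ[i] :=
  smallDivisors t x ∩ largeDivisors t x

lemma mem_smallDivisors {t : ℝ} {a x : ℤ[i]} :
    a ∈ smallDivisors t x ↔ a ∈ normBall t ∧ a ∣ x := by
  simp only [smallDivisors, mem_filter]

lemma mem_largeDivisors {t : ℝ} {a x : ℤ[i]} : a ∈ largeDivisors t x ↔
    a ∈ normBall (absNorm x) ∧ a ∣ x ∧ (absNorm x : ℝ) ≤ t * absNorm a := by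
  simp only [largeDivisors, mem_filter]

lemma mem_smallDivisors_of_ne_zero {t : ℝ} {a x : ℤ[i]} (hx : x ≠ 0) :
    a ∈ smallDivisors t x ↔ a ∣ x ∧ (absNorm a : ℝ) ≤ t := by
  rw [mem_smallDivisors, mem_normBall]
  exact ⟨fun h => ⟨h.2, h.1.2⟩, fun h => ⟨⟨ne_zero_of_dvd_ne_zero hx h.1, h.2⟩, h.1⟩⟩

lemma mem_largeDivisors_of_ne_zero {t : ℝ} {a x : ℤ[i]} (hx : x ≠ 0) :
    a ∈ largeDivisors t x ↔ a ∣ x ∧ (absNorm x : ℝ) ≤ t * absNorm a := by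
  rw [mem_largeDivisors, mem_normBall, Nat.cast_le]
  exact and_iff_right_of_imp fun h =>
    ⟨ne_zero_of_dvd_ne_zero hx h.1, absNorm_le_of_dvd hx h.1⟩

lemma absNorm_le_of_mem_balancedDivisors {t : ℝ} {a x : ℤ[i]} (ha : a ∈ balancedDivisors t x) :
    (absNorm x : ℝ) ≤ t * absNorm a :=
  (mem_largeDivisors.1 (mem_inter.1 ha).2).2.2

lemma balancedDivisors_subset (t : ℝ) (x : ℤ[i]) : balancedDivisors t x ⊆ smallDivisors t x :=
  inter_subset_left

lemma smallDivisors_neg (t : ℝ) (x : ℤ[i]) : smallDivisors t (-x) = smallDivisors t x := by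
  ext a
  rw [mem_smallDivisors, mem_smallDivisors, dvd_neg]

lemma balancedDivisors_neg (t : ℝ) (x : ℤ[i]) :
    balancedDivisors t (-x) = balancedDivisors t x := by
  ext a
  rw [balancedDivisors, balancedDivisors, mem_inter, mem_inter, smallDivisors_neg,
    mem_largeDivisors, mem_largeDivisors, dvd_neg, absNorm_neg]

lemma mem_largeDivisors_mul_iff {a b : ℤ[i]} (h : a * b ≠ 0) {t : ℝ} :
    b ∈ largeDivisors t (a * b) ↔ a ∈ smallDivisors t (a * b) := by
  have hb : (0 : ℝ) < absNorm b := by exact_mod_cast absNorm_pos.2 (right_ne_zero_of_mul h)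
  rw [mem_largeDivisors_of_ne_zero h, mem_smallDivisors_of_ne_zero h, map_mul, Nat.cast_mul,
    mul_le_mul_iff_left₀ hb, and_iff_right (dvd_mul_left b a), and_iff_right (dvd_mul_right a b)]

lemma card_largeDivisors {x : ℤ[i]} (hx : x ≠ 0) (t : ℝ) :
    #(largeDivisors t x) = #(smallDivisors t x) := by
  have hcodivisor {a : ℤ[i]} (ha : a ∣ x) : a * (x / a) = x :=
    EuclideanDomain.mul_div_cancel' (ne_zero_of_dvd_ne_zero hx ha) ha
  have hinv {a : ℤ[i]} (ha : a ∣ x) : x / (x / a) = a := by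
    have hq : x / a ≠ 0 := right_ne_zero_of_mul ((hcodivisor ha).symm ▸ hx)
    exact (EuclideanDomain.eq_div_of_mul_eq_left hq (hcodivisor ha)).symm
  have hmem {a : ℤ[i]} (ha : a ∣ x) : x / a ∈ largeDivisors t x ↔ a ∈ smallDivisors t x := by
    simpa only [hcodivisor ha] using
      mem_largeDivisors_mul_iff (a := a) (b := x / a) (t := t) ((hcodivisor ha).symm ▸ hx)
  have hdvd {a : ℤ[i]} (ha : a ∈ smallDivisors t x) : a ∣ x := (mem_smallDivisors.1 ha).2
  have hdvd' {a : ℤ[i]} (ha : a ∈ largeDivisors t x) : a ∣ x :=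
    ((mem_largeDivisors_of_ne_zero hx).1 ha).1
  refine (card_nbij' (x / ·) (x / ·) (fun a ha => (hmem (hdvd ha)).2 ha) (fun a ha => ?_)
    (fun a ha => hinv (hdvd ha)) fun a ha => hinv (hdvd' ha)).symm
  have ha' := hdvd' ha
  refine (hmem (Dvd.intro_left a (hcodivisor ha'))).1 ?_
  rwa [hinv ha']

lemma dG_eq_card_union {t : ℝ} (ht : 0 ≤ t) {x : ℤ[i]} (hx : x ≠ 0)
    (hxt : (absNorm x : ℝ) ≤ t ^ 2) : dG x = #(smallDivisors t x ∪ largeDivisors t x) := by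
  rw [dG, ← Set.ncard_coe_finset]
  congr 1
  ext a
  rw [mem_coe, mem_union, mem_smallDivisors_of_ne_zero hx, mem_largeDivisors_of_ne_zero hx]
  constructor
  · rintro ⟨-, ha⟩
    rcases le_total (absNorm a : ℝ) t with h | h
    · exact Or.inl ⟨ha, h⟩
    · exact Or.inr ⟨ha, hxt.trans (by rw [sq]; gcongr)⟩
  · rintro (h | h) <;> exact ⟨ne_zero_of_dvd_ne_zero hx h.1, h.1⟩

theorem dG_add_card_balancedDivisors {t : ℝ} (ht : 0 ≤ t) {x : ℤ[i]} (hx : x ≠ 0)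
    (hxt : (absNorm x : ℝ) ≤ t ^ 2) :
    dG x + #(balancedDivisors t x) = 2 * #(smallDivisors t x) := by
  rw [dG_eq_card_union ht hx hxt, balancedDivisors, card_union_add_card_inter,
    card_largeDivisors hx, two_mul]

lemma abs_dG_mul_dG_sub_le {t : ℝ} (ht : 0 ≤ t) {x y : ℤ[i]} (hx : x ≠ 0) (hy : y ≠ 0)
    (hxt : (absNorm x : ℝ) ≤ t ^ 2) (hyt : (absNorm y : ℝ) ≤ t ^ 2) :
    |(dG x * dG y : ℝ) - 4 * (#(smallDivisors t x) * #(smallDivisors t y))|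
      ≤ 2 * (#(balancedDivisors t x) * #(smallDivisors t y))
        + 2 * (#(smallDivisors t x) * #(balancedDivisors t y)) := by
  have hdx : (dG x : ℝ) = 2 * #(smallDivisors t x) - #(balancedDivisors t x) :=
    eq_sub_of_add_eq (by exact_mod_cast dG_add_card_balancedDivisors ht hx hxt)
  have hdy : (dG y : ℝ) = 2 * #(smallDivisors t y) - #(balancedDivisors t y) :=
    eq_sub_of_add_eq (by exact_mod_cast dG_add_card_balancedDivisors ht hy hyt)
  have hle : (#(balancedDivisors t y) : ℝ) ≤ #(smallDivisors t y) := by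
    exact_mod_cast card_le_card (balancedDivisors_subset t y)
  have hmul : (#(balancedDivisors t x) * #(balancedDivisors t y) : ℝ)
      ≤ #(balancedDivisors t x) * #(smallDivisors t y) := by gcongr
  have hnonneg : (0 : ℝ) ≤ #(balancedDivisors t x) * #(balancedDivisors t y) := by positivity
  have hnonneg' : (0 : ℝ) ≤ #(smallDivisors t x) * #(balancedDivisors t y) := by positivity
  rw [hdx, hdy, abs_le]
  constructor <;> linarith

end HyperbolaMethod

section Correlation

lemma sum_card_mul_card {α β γ : Type*} [DecidableEq β] [DecidableEq γ] (P : Finset α)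
    (F : α → Finset β) (G : α → Finset γ) {Q : Finset (β × γ)} (hQ : ∀ x ∈ P, F x ×ˢ G x ⊆ Q) :
    ∑ x ∈ P, #(F x) * #(G x) = ∑ s ∈ Q, #{x ∈ P | s.1 ∈ F x ∧ s.2 ∈ G x} := by
  have hfiber : ∀ x ∈ P,
      #(F x) * #(G x) = #(Q.bipartiteAbove (fun x s => s.1 ∈ F x ∧ s.2 ∈ G x) x) := by
    intro x hx
    rw [← card_product]
    congr 1
    ext s
    rw [mem_bipartiteAbove, ← mem_product]
    exact (and_iff_right_of_imp fun hs => hQ x hx hs).symm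
  rw [sum_congr rfl hfiber, sum_card_bipartiteAbove_eq_sum_card_bipartiteBelow]
  rfl

lemma exists_dvd_sub_and_dvd_sub_iff {R : Type*} [CommRing R] {a c : R} (h : IsCoprime a c)
    (p q : R) : ∃ r, ∀ x, a ∣ x - p ∧ c ∣ x - q ↔ a * c ∣ x - r := by
  obtain ⟨u, v, huv⟩ := h
  have ha (x : R) : x - (p * (v * c) + q * (u * a)) = x - p + a * ((p - q) * u) := by
    linear_combination (-p) * huv
  have hc (x : R) : x - (p * (v * c) + q * (u * a)) = x - q + c * ((q - p) * v) := by
    linear_combination (-q) * huv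
  refine ⟨p * (v * c) + q * (u * a), fun x => ⟨fun hx => ?_, fun hx => ⟨?_, ?_⟩⟩⟩
  · refine IsCoprime.mul_dvd ⟨u, v, huv⟩ ?_ ?_
    · exact ha x ▸ dvd_add hx.1 (dvd_mul_right _ _)
    · exact hc x ▸ dvd_add hx.2 (dvd_mul_right _ _)
  · exact (dvd_add_left (dvd_mul_right _ _)).1 (ha x ▸ dvd_of_mul_right_dvd hx)
  · exact (dvd_add_left (dvd_mul_right _ _)).1 (hc x ▸ dvd_of_mul_left_dvd hx)

lemma isCoprime_of_dvd_of_dvd_add_one {R : Type*} [CommRing R] {a c x : R} (ha : a ∣ x)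
    (hc : c ∣ x + 1) : IsCoprime a c :=
  IsCoprime.of_isCoprime_of_dvd_left
    (IsCoprime.of_isCoprime_of_dvd_right ⟨-1, 1, by ring⟩ hc) ha

/-- The Gaussian integers `x` of norm at most `t` with `a ∣ x` and `c ∣ x + 1`. -/
def consecutiveMultiples (a c : ℤ[i]) (t : ℝ) : Set ℤ[i] :=
  {x | (a ∣ x ∧ c ∣ x + 1) ∧ (absNorm x : ℝ) ≤ t}

lemma finite_consecutiveMultiples (a c : ℤ[i]) (t : ℝ) : (consecutiveMultiples a c t).Finite :=
  (finite_setOf_absNorm_le t).subset fun _ => And.right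

lemma abs_ncard_consecutiveMultiples_sub_le {a c : ℤ[i]} (ha : a ≠ 0) (hc : c ≠ 0)
    (hac : IsCoprime a c) {t : ℝ} (ht : 0 ≤ t) :
    |((consecutiveMultiples a c t).ncard : ℝ) - π * (t / (absNorm a * absNorm c))|
      ≤ 16 * (√(t / (absNorm a * absNorm c)) + 1) := by
  obtain ⟨r, hr⟩ := exists_dvd_sub_and_dvd_sub_iff hac 0 (-1)
  simp only [sub_zero, sub_neg_eq_add] at hr
  simpa only [consecutiveMultiples, hr, map_mul, Nat.cast_mul] using
    abs_ncard_residueClass_sub_le (mul_ne_zero ha hc) r ht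

lemma ncard_consecutiveMultiples_le {a c : ℤ[i]} (ha : a ≠ 0) (hc : c ≠ 0)
    (hac : IsCoprime a c) {t : ℝ} (ht : 0 ≤ t) :
    ((consecutiveMultiples a c t).ncard : ℝ) ≤ 32 * (t / (absNorm a * absNorm c) + 1) := by
  have hcount := (abs_le.1 (abs_ncard_consecutiveMultiples_sub_le ha hc hac ht)).2
  have hratio : 0 ≤ t / (absNorm a * absNorm c : ℝ) := by positivity
  have hsqrt : √(t / (absNorm a * absNorm c)) ≤ t / (absNorm a * absNorm c) + 1 :=
    Real.sqrt_le_iff.2 ⟨by positivity, by nlinarith⟩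
  nlinarith [pi_lt_four]

lemma smallDivisors_product_subset_coprimePairs (t : ℝ) (x : ℤ[i]) :
    smallDivisors t x ×ˢ smallDivisors t (x + 1) ⊆ coprimePairs t := fun p hp => by
  rw [mem_product, mem_smallDivisors, mem_smallDivisors] at hp
  exact mem_coprimePairs.2
    ⟨⟨hp.1.1, hp.2.1⟩, isCoprime_of_dvd_of_dvd_add_one hp.1.2 hp.2.2⟩

lemma sum_coprimePairs_le {F : ℤ[i] × ℤ[i] → ℝ} (hF : ∀ p, 0 ≤ F p) (t : ℝ) :
    ∑ p ∈ coprimePairs t, F p ≤ ∑ a ∈ normBall t, ∑ c ∈ normBall t, F (a, c) := by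
  rw [← sum_product]
  exact sum_le_sum_of_subset_of_nonneg
    (fun p hp => mem_product.2 (mem_coprimePairs.1 hp).1) fun p _ _ => hF p

theorem sum_card_balancedDivisors_mul_card_smallDivisors_le (P : Finset ℤ[i]) {t : ℝ}
    (ht : 0 ≤ t) :
    ∑ x ∈ P, (#(balancedDivisors t x) * #(smallDivisors t (x + 1)) : ℝ)
      ≤ 32 * (t * (#(normBall t) * invNormSum t) + #(normBall t) ^ 2) := by
  have hswap := sum_card_mul_card P (balancedDivisors t) (fun x => smallDivisors t (x + 1))
    fun x _ => (product_subset_product_left (balancedDivisors_subset t x)).trans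
      (smallDivisors_product_subset_coprimePairs t x)
  have hcount : ∀ p ∈ coprimePairs t,
      (#{x ∈ P | p.1 ∈ balancedDivisors t x ∧ p.2 ∈ smallDivisors t (x + 1)} : ℝ)
        ≤ 32 * (t * (1 / absNorm p.2) + 1) := by
    intro p hp
    simp only [mem_coprimePairs, mem_normBall] at hp
    have hN : (absNorm p.1 : ℝ) ≠ 0 := by exact_mod_cast (absNorm_pos.2 hp.1.1.1).ne'
    have hsub : (#{x ∈ P | p.1 ∈ balancedDivisors t x ∧ p.2 ∈ smallDivisors t (x + 1)} : ℝ)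
        ≤ (consecutiveMultiples p.1 p.2 (t * absNorm p.1)).ncard := by
      rw [← Set.ncard_coe_finset]
      refine Nat.cast_le.2 (Set.ncard_le_ncard (fun x hx => ?_) (finite_consecutiveMultiples _ _ _))
      obtain ⟨-, hbal, hsmall⟩ := mem_filter.1 (mem_coe.1 hx)
      exact ⟨⟨(mem_smallDivisors.1 (balancedDivisors_subset t x hbal)).2,
        (mem_smallDivisors.1 hsmall).2⟩, absNorm_le_of_mem_balancedDivisors hbal⟩
    refine (hsub.trans (ncard_consecutiveMultiples_le hp.1.1.1 hp.1.2.1 hp.2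
      (by positivity))).trans_eq ?_
    field_simp
  calc ∑ x ∈ P, (#(balancedDivisors t x) * #(smallDivisors t (x + 1)) : ℝ)
      = ∑ p ∈ coprimePairs t,
          (#{x ∈ P | p.1 ∈ balancedDivisors t x ∧ p.2 ∈ smallDivisors t (x + 1)} : ℝ) := by
        exact_mod_cast hswap
    _ ≤ ∑ p ∈ coprimePairs t, 32 * (t * (1 / absNorm p.2) + 1) := sum_le_sum hcount
    _ ≤ ∑ _a ∈ normBall t, ∑ c ∈ normBall t, 32 * (t * (1 / absNorm c) + 1) :=
        sum_coprimePairs_le (fun p => by positivity) t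
    _ = 32 * (t * (#(normBall t) * invNormSum t) + #(normBall t) ^ 2) := by
        simp only [← mul_sum, sum_add_distrib, sum_const, nsmul_eq_mul, mul_one, invNormSum]
        ring

lemma sum_card_smallDivisors_mul_card_balancedDivisors_le (P : Finset ℤ[i]) {t : ℝ}
    (ht : 0 ≤ t) :
    ∑ x ∈ P, (#(smallDivisors t x) * #(balancedDivisors t (x + 1)) : ℝ)
      ≤ 32 * (t * (#(normBall t) * invNormSum t) + #(normBall t) ^ 2) := by
  have hinj : Function.Injective fun x : ℤ[i] => -(x + 1) :=
    neg_injective.comp (add_left_injective 1)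
  refine le_trans (le_of_eq ?_)
    (sum_card_balancedDivisors_mul_card_smallDivisors_le (P.map ⟨_, hinj⟩) ht)
  rw [sum_map]
  refine sum_congr rfl fun x _ => ?_
  have hx : -(x + 1) + 1 = -x := by ring
  rw [Function.Embedding.coeFn_mk, hx, smallDivisors_neg, balancedDivisors_neg, mul_comm]

lemma sq_sum_one_div_sqrt_absNorm_le (t : ℝ) :
    (∑ a ∈ normBall t, 1 / √(absNorm a)) ^ 2 ≤ #(normBall t) * invNormSum t := by
  refine sq_sum_le_card_mul_sum_sq.trans_eq ?_
  simp only [invNormSum, div_pow, one_pow, Real.sq_sqrt (Nat.cast_nonneg _)]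

lemma abs_card_filter_smallDivisors_sub_le {X t : ℝ} (hX : 0 ≤ X) {p : ℤ[i] × ℤ[i]}
    (hp : p ∈ coprimePairs t) :
    |(#{x ∈ (normBall X).erase (-1) |
        p.1 ∈ smallDivisors t x ∧ p.2 ∈ smallDivisors t (x + 1)} : ℝ)
        - π * X * (1 / (absNorm p.1 * absNorm p.2))|
      ≤ 18 * (√X * (1 / √(absNorm p.1) * (1 / √(absNorm p.2))) + 1) := by
  obtain ⟨⟨ha, hc⟩, hcoprime⟩ := mem_coprimePairs.1 hp
  set Q : Finset ℤ[i] := {x ∈ (normBall X).erase (-1) |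
    p.1 ∈ smallDivisors t x ∧ p.2 ∈ smallDivisors t (x + 1)}
  have hQ : (Q : Set ℤ[i]) = consecutiveMultiples p.1 p.2 X \ {0, -1} := by
    ext x
    simp only [Q, mem_coe, mem_filter, mem_erase, mem_smallDivisors, ha, hc, true_and,
      consecutiveMultiples, Set.mem_sdiff, Set.mem_ofPred_eq, Set.mem_insert_iff,
      Set.mem_singleton_iff]
    rw [mem_normBall]
    tauto
  have hlower : (#Q : ℝ) ≤ (consecutiveMultiples p.1 p.2 X).ncard := by
    rw [← Set.ncard_coe_finset, hQ]
    exact_mod_cast Set.ncard_le_ncard Set.sdiff_subset (finite_consecutiveMultiples _ _ _)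
  have hupper : ((consecutiveMultiples p.1 p.2 X).ncard : ℝ) ≤ #Q + 2 := by
    have := Set.ncard_le_ncard_sdiff_add_ncard (consecutiveMultiples p.1 p.2 X) {0, -1}
    rw [← hQ, Set.ncard_coe_finset, Set.ncard_pair (by decide)] at this
    exact_mod_cast this
  have hcount := abs_ncard_consecutiveMultiples_sub_le (mem_normBall.1 ha).1 (mem_normBall.1 hc).1
    hcoprime hX
  have hsqrt : √(X / (absNorm p.1 * absNorm p.2))
      = √X * (1 / √(absNorm p.1) * (1 / √(absNorm p.2))) := by
    rw [Real.sqrt_div hX, Real.sqrt_mul (Nat.cast_nonneg _), one_div_mul_one_div, mul_one_div]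
  rw [← hsqrt, mul_assoc, mul_one_div]
  have := Real.sqrt_nonneg (X / (absNorm p.1 * absNorm p.2))
  rw [abs_le] at hcount ⊢
  constructor <;> linarith

theorem abs_sum_card_smallDivisors_mul_sub_le {X : ℝ} (hX : 0 ≤ X) (t : ℝ) :
    |∑ x ∈ (normBall X).erase (-1), (#(smallDivisors t x) * #(smallDivisors t (x + 1)) : ℝ)
        - π * X * coprimeInvNormSum t|
      ≤ 18 * (√X * (#(normBall t) * invNormSum t) + #(normBall t) ^ 2) := by
  have hswap := sum_card_mul_card ((normBall X).erase (-1)) (smallDivisors t)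
    (fun x => smallDivisors t (x + 1)) fun x _ => smallDivisors_product_subset_coprimePairs t x
  have hswap' : ∑ x ∈ (normBall X).erase (-1),
      (#(smallDivisors t x) * #(smallDivisors t (x + 1)) : ℝ) = ∑ p ∈ coprimePairs t,
        (#{x ∈ (normBall X).erase (-1) |
          p.1 ∈ smallDivisors t x ∧ p.2 ∈ smallDivisors t (x + 1)} : ℝ) := by
    exact_mod_cast hswap
  rw [hswap', coprimeInvNormSum, mul_sum, ← sum_sub_distrib]
  calc |∑ p ∈ coprimePairs t, _|
      ≤ ∑ p ∈ coprimePairs t, 18 * (√X * (1 / √(absNorm p.1) * (1 / √(absNorm p.2))) + 1) :=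
        (abs_sum_le_sum_abs _ _).trans
          (sum_le_sum fun p hp => abs_card_filter_smallDivisors_sub_le hX hp)
    _ ≤ ∑ a ∈ normBall t, ∑ c ∈ normBall t,
          18 * (√X * (1 / √(absNorm a) * (1 / √(absNorm c))) + 1) :=
        sum_coprimePairs_le (fun p => by positivity) t
    _ = 18 * (√X * (∑ a ∈ normBall t, 1 / √(absNorm a)) ^ 2 + #(normBall t) ^ 2) := by
        simp only [← mul_sum, sum_add_distrib, sum_const, nsmul_eq_mul, mul_one, ← sum_mul]
        ring
    _ ≤ 18 * (√X * (#(normBall t) * invNormSum t) + #(normBall t) ^ 2) := by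
        gcongr
        exact sq_sum_one_div_sqrt_absNorm_le t

end Correlation

section Assembly

/-- The correlation `∑ d(x) d(x + 1)` over `x ∈ ℤ[i] ∖ {0, -1}` of norm at most `X`, as a finite
sum; `normBall X` already omits `0`. -/
noncomputable def divisorCorrelation (X : ℝ) : ℝ :=
  ∑ x ∈ (normBall X).erase (-1), (dG x * dG (x + 1) : ℝ)

lemma tsum_dG_mul_dG_eq_divisorCorrelation (X : ℝ) :
    ∑' x : {x : ℤ[i] // x ≠ 0 ∧ x ≠ -1 ∧ (Zsqrtd.norm x : ℝ) ≤ X},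
      (dG x.1 * dG (x.1 + 1) : ℝ) = divisorCorrelation X := by
  have hmem (x : ℤ[i]) : x ≠ 0 ∧ x ≠ -1 ∧ (Zsqrtd.norm x : ℝ) ≤ X ↔
      x ∈ (normBall X).erase (-1) := by
    rw [mem_erase, mem_normBall, cast_absNorm]
    tauto
  rw [divisorCorrelation, ← Finset.tsum_subtype]
  exact (Equiv.subtypeEquivRight hmem).tsum_eq
    fun x : (normBall X).erase (-1) => (dG x.1 * dG (x.1 + 1) : ℝ)

lemma absNorm_add_one_le {x : ℤ[i]} {r : ℝ} (hr : 0 ≤ r) (hx : (absNorm x : ℝ) ≤ r ^ 2) :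
    (absNorm (x + 1) : ℝ) ≤ (r + 1) ^ 2 := by
  rw [cast_absNorm_eq_norm_sq] at hx ⊢
  rw [map_add, map_one]
  have hle : ‖(x : ℂ)‖ ≤ r := le_of_sq_le_sq hx hr
  have htriangle : ‖(x : ℂ) + 1‖ ≤ r + 1 := by
    simpa using (norm_add_le (x : ℂ) 1).trans (add_le_add_left hle _)
  gcongr

theorem abs_divisorCorrelation_sub_le {X t : ℝ} (hX : 0 ≤ X) (ht : √X + 1 ≤ t) :
    |divisorCorrelation X - 4 * π * X * coprimeInvNormSum t|
      ≤ 200 * (t * (#(normBall t) * invNormSum t) + #(normBall t) ^ 2) := by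
  have hsqrt := Real.sqrt_nonneg X
  have ht0 : 0 ≤ t := by linarith
  have hhyperbola : ∀ x ∈ (normBall X).erase (-1),
      |(dG x * dG (x + 1) : ℝ) - 4 * (#(smallDivisors t x) * #(smallDivisors t (x + 1)))|
        ≤ 2 * (#(balancedDivisors t x) * #(smallDivisors t (x + 1)))
          + 2 * (#(smallDivisors t x) * #(balancedDivisors t (x + 1))) := by
    intro x hx
    obtain ⟨hx1, hx0, hxX⟩ : x ≠ -1 ∧ x ≠ 0 ∧ (absNorm x : ℝ) ≤ X := by
      rwa [mem_erase, mem_normBall] at hx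
    have hxX' : (absNorm x : ℝ) ≤ √X ^ 2 := by rwa [Real.sq_sqrt hX]
    exact abs_dG_mul_dG_sub_le ht0 hx0 (fun h => hx1 (eq_neg_of_add_eq_zero_left h))
      (hxX'.trans (by gcongr; linarith))
      ((absNorm_add_one_le hsqrt hxX').trans (by gcongr))
  have hdouble := (abs_sum_le_sum_abs _ _).trans (sum_le_sum hhyperbola)
  rw [sum_sub_distrib, sum_add_distrib, ← mul_sum, ← mul_sum, ← mul_sum] at hdouble
  have hbalanced := sum_card_balancedDivisors_mul_card_smallDivisors_le
    ((normBall X).erase (-1)) ht0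
  have hbalanced' := sum_card_smallDivisors_mul_card_balancedDivisors_le
    ((normBall X).erase (-1)) ht0
  have hsmall := abs_sum_card_smallDivisors_mul_sub_le hX t
  have hsqrt_le : √X * (#(normBall t) * invNormSum t) ≤ t * (#(normBall t) * invNormSum t) := by
    have := invNormSum_nonneg t
    gcongr
    linarith
  rw [divisorCorrelation]
  rw [abs_le] at hdouble hsmall ⊢
  constructor <;> linarith

lemma tendsto_sqrt_add_one_atTop : Tendsto (fun X : ℝ => √X + 1) atTop atTop :=
  tendsto_atTop_add_const_right _ _ Real.tendsto_sqrt_atTop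

lemma sqrt_add_one_sq_isBigO : (fun X : ℝ => (√X + 1) ^ 2) =O[atTop] fun X => X := by
  refine IsBigO.of_bound 4 ?_
  filter_upwards [eventually_ge_atTop 1] with X hX
  have hsqrt : 1 ≤ √X := Real.one_le_sqrt.2 hX
  have hsq : √X ^ 2 = X := Real.sq_sqrt (zero_le_one.trans hX)
  rw [Real.norm_of_nonneg (by positivity), Real.norm_of_nonneg (zero_le_one.trans hX)]
  nlinarith

lemma log_sqrt_add_one_sub_isBigO :
    (fun X => log (√X + 1) - log X / 2) =O[atTop] fun _ => (1 : ℝ) := by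
  refine IsBigO.of_bound (log 2) ?_
  filter_upwards [eventually_ge_atTop 1] with X hX
  have hsqrt : 1 ≤ √X := Real.one_le_sqrt.2 hX
  rw [← Real.log_sqrt (zero_le_one.trans hX), ← Real.log_div (by positivity) (by positivity),
    norm_one, mul_one, Real.norm_of_nonneg (Real.log_nonneg ?_)]
  · refine Real.log_le_log (by positivity) ?_
    rw [div_le_iff₀ (by positivity)]
    linarith
  · rw [le_div_iff₀ (by positivity)]
    linarith

lemma log_sqrt_add_one_isBigO : (fun X => log (√X + 1)) =O[atTop] log := by
  refine ((log_sqrt_add_one_sub_isBigO.trans one_isBigO_log).add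
    ((isBigO_refl log atTop).const_mul_left 2⁻¹)).congr_left fun X => ?_
  ring

lemma log_sqrt_add_one_sq_sub_isBigO :
    (fun X => log (√X + 1) ^ 2 - log X ^ 2 / 4) =O[atTop] log := by
  have hadd := log_sqrt_add_one_isBigO.add ((isBigO_refl log atTop).const_mul_left 2⁻¹)
  refine (hadd.mul log_sqrt_add_one_sub_isBigO).congr (fun X => ?_) fun X => mul_one _
  ring

lemma divisorCorrelation_sub_coprimeInvNormSum_isBigO :
    (fun X => divisorCorrelation X - 4 * π * X * coprimeInvNormSum (√X + 1))
      =O[atTop] fun X => X * log X := by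
  have hbound : (fun X => divisorCorrelation X - 4 * π * X * coprimeInvNormSum (√X + 1))
      =O[atTop] fun X => (√X + 1) * (#(normBall (√X + 1)) * invNormSum (√X + 1))
        + (#(normBall (√X + 1)) : ℝ) ^ 2 := by
    refine IsBigO.of_bound 200 ?_
    filter_upwards [eventually_ge_atTop 0] with X hX
    exact (abs_divisorCorrelation_sub_le hX le_rfl).trans (by gcongr; exact le_abs_self _)
  have hcard : (fun t => (#(normBall t) : ℝ) ^ 2) =O[atTop] fun t => t ^ 2 * log t := by
    simpa only [mul_one] using (card_normBall_isBigO.pow 2).mul one_isBigO_log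
  have hmain : (fun t => t * (#(normBall t) * invNormSum t)) =O[atTop] fun t => t ^ 2 * log t := by
    refine ((isBigO_refl (fun t : ℝ => t) atTop).mul
      (card_normBall_isBigO.mul invNormSum_isBigO_log)).congr_right fun t => ?_
    ring
  exact hbound.trans (((hmain.add hcard).comp_tendsto tendsto_sqrt_add_one_atTop).trans
    (sqrt_add_one_sq_isBigO.mul log_sqrt_add_one_isBigO))

lemma coprimeInvNormSum_sqrt_add_one_sub_isBigO :
    (fun X => coprimeInvNormSum (√X + 1) - π ^ 2 / SGauss * log X ^ 2) =O[atTop] log := by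
  have hcoprime := (coprimeInvNormSum_sub_isBigO.comp_tendsto tendsto_sqrt_add_one_atTop).trans
    log_sqrt_add_one_isBigO
  refine (hcoprime.add (log_sqrt_add_one_sq_sub_isBigO.const_mul_left
    (4 * π ^ 2 / SGauss))).congr_left fun X => ?_
  simp only [Function.comp_apply]
  ring

end Assembly

/-- Equation (83), Gaussian-integer case of Theorem 2: as `X → +∞`,
`∑_{x ∈ ℤ[i] ∖ {0,-1}, N(x) ≤ X} d(x) d(x+1) = (4π³/S) · X (log X)² + O(X log X)`. -/
theorem binary_additive_divisor_gaussian :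
    (fun X : ℝ =>
        (∑' x : {x : GaussianInt // x ≠ 0 ∧ x ≠ -1 ∧ (Zsqrtd.norm x : ℝ) ≤ X},
            (dG x.1 * dG (x.1 + 1) : ℝ)) -
          4 * Real.pi ^ 3 / SGauss * X * Real.log X ^ 2)
      =O[Filter.atTop] fun X : ℝ => X * Real.log X := by
  have hmain : (fun X => 4 * π * (X * (coprimeInvNormSum (√X + 1) - π ^ 2 / SGauss * log X ^ 2)))
      =O[atTop] fun X => X * log X :=
    ((isBigO_refl _ _).mul coprimeInvNormSum_sqrt_add_one_sub_isBigO).const_mul_left _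
  refine (divisorCorrelation_sub_coprimeInvNormSum_isBigO.add hmain).congr_left fun X => ?_
  rw [tsum_dG_mul_dG_eq_divisorCorrelation]
  ring
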